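/- arXiv:1801.00925 — 2 statements merged into one kernel-verified Lean document; each statement's English description precedes it below -/
import Mathlib

section
/- Let M, N be positive integers with N ≥ 24M, let s > 2²⁴, and let φ₁, …, φ_N : (0,∞) → (0,∞) be measurable functions such that ∑_{j=1}^N φ_j(t) ≤ 2π for every t > 0 (e.g. φ_j(t) is the angular measure of S(0,t) ∩ E_j for pairwise disjoint domains E_j). Then at least N − 12M indices j satisfy both ∫_{4√s}^{s/4} π/(t φ_j(t)) dt > M log s and ∫_{4s}^{s²/4} π/(t φ_j(t)) dt > M log s. -/
open Real MeasureTheory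

theorem lintegral_Icc_inv {a b : ℝ} (ha : 0 < a) (hab : a ≤ b) :
    ∫⁻ t in Set.Icc a b, ENNReal.ofReal t⁻¹ = ENNReal.ofReal (Real.log (b / a)) := by
  have hpos : ∀ t ∈ Set.Icc a b, 0 < t := fun t ht => ha.trans_le ht.1
  have hint : IntegrableOn (fun t : ℝ => t⁻¹) (Set.Icc a b) :=
    (continuousOn_inv₀.mono fun t ht => (hpos t ht).ne').integrableOn_Icc
  rw [← ofReal_integral_eq_lintegral_ofReal hint, integral_Icc_eq_integral_Ioc,
    ← intervalIntegral.integral_of_le hab, integral_inv_of_pos ha (ha.trans_le hab)]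
  filter_upwards [ae_restrict_mem measurableSet_Icc] with t ht
  exact (inv_pos.2 (hpos t ht)).le

theorem sq_card_mul_inv_le_sum {ι : Type*} (B : Finset ι) {x : ι → ℝ} {t : ℝ} (ht : 0 < t)
    (hx : ∀ j ∈ B, 0 < x j) (hsum : ∑ j ∈ B, x j ≤ 2 * π) :
    (B.card : ℝ) ^ 2 * t⁻¹ ≤ ∑ j ∈ B, 2 * (π / (t * x j)) := by
  rcases B.eq_empty_or_nonempty with rfl | hB
  · simp
  have hS : 0 < ∑ j ∈ B, x j := Finset.sum_pos hx hB
  have hcs := Finset.sq_sum_div_le_sum_sq_div B (fun _ => (1 : ℝ)) hx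
  simp only [Finset.sum_const, nsmul_eq_mul, mul_one, one_pow] at hcs
  have hpi := Real.pi_pos
  have hle : (B.card : ℝ) ^ 2 / (2 * π) ≤ ∑ j ∈ B, 1 / x j :=
    (div_le_div_of_nonneg_left (by positivity) hS hsum).trans hcs
  have heq : ∑ j ∈ B, 2 * (π / (t * x j)) = 2 * π * t⁻¹ * ∑ j ∈ B, 1 / x j := by
    rw [Finset.mul_sum]
    refine Finset.sum_congr rfl fun j hj => ?_
    have := (hx j hj).ne'
    field_simp
  rw [heq]
  calc (B.card : ℝ) ^ 2 * t⁻¹ = 2 * π * t⁻¹ * ((B.card : ℝ) ^ 2 / (2 * π)) := by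
        field_simp
    _ ≤ _ := by gcongr

/-- Indices with small integral are few: integrating the Cauchy–Schwarz inequality over `[a, b]`. -/
theorem card_mul_log_le {ι : Type*} (B : Finset ι) {φ : ι → ℝ → ℝ} {a b C : ℝ}
    (ha : 0 < a) (hab : a ≤ b) (hC : 0 ≤ C) (hmeas : ∀ j ∈ B, Measurable (φ j))
    (hpos : ∀ j ∈ B, ∀ t > (0 : ℝ), 0 < φ j t)
    (hsum : ∀ t > (0 : ℝ), ∑ j ∈ B, φ j t ≤ 2 * π)
    (hB : ∀ j ∈ B, ∫⁻ t in Set.Icc a b, ENNReal.ofReal (π / (t * φ j t)) ≤ ENNReal.ofReal C) :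
    (B.card : ℝ) * Real.log (b / a) ≤ 2 * C := by
  have hpi := Real.pi_pos
  have hkey : ENNReal.ofReal ((B.card : ℝ) ^ 2 * Real.log (b / a)) ≤
      ENNReal.ofReal (B.card * (2 * C)) := by
    calc ENNReal.ofReal ((B.card : ℝ) ^ 2 * Real.log (b / a))
        = ∫⁻ t in Set.Icc a b, ENNReal.ofReal ((B.card : ℝ) ^ 2) * ENNReal.ofReal t⁻¹ := by
          rw [lintegral_const_mul' _ _ ENNReal.ofReal_ne_top, lintegral_Icc_inv ha hab,
            ENNReal.ofReal_mul (by positivity)]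
      _ ≤ ∫⁻ t in Set.Icc a b, ∑ j ∈ B, 2 * ENNReal.ofReal (π / (t * φ j t)) := by
          refine setLIntegral_mono' measurableSet_Icc fun t ht => ?_
          have ht0 : 0 < t := ha.trans_le ht.1
          have h := sq_card_mul_inv_le_sum B ht0 (fun j hj => hpos j hj t ht0) (hsum t ht0)
          rw [← ENNReal.ofReal_mul (by positivity)]
          refine (ENNReal.ofReal_le_ofReal h).trans_eq ?_
          rw [ENNReal.ofReal_sum_of_nonneg]
          · simp [ENNReal.ofReal_mul]
          · intro j hj
            have := hpos j hj t ht0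
            positivity
      _ = ∑ j ∈ B, 2 * ∫⁻ t in Set.Icc a b, ENNReal.ofReal (π / (t * φ j t)) := by
          rw [lintegral_finsetSum']
          · simp [lintegral_const_mul']
          · intro j hj
            have := hmeas j hj
            fun_prop
      _ ≤ ∑ j ∈ B, 2 * ENNReal.ofReal C :=
          Finset.sum_le_sum fun j hj => by gcongr; exact hB j hj
      _ = ENNReal.ofReal (B.card * (2 * C)) := by
          simp [ENNReal.ofReal_mul]
  rw [ENNReal.ofReal_le_ofReal_iff (by positivity)] at hkey
  rcases B.eq_empty_or_nonempty with rfl | hne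
  · simpa using hC
  have hc : (0 : ℝ) < B.card := by exact_mod_cast hne.card_pos
  refine le_of_mul_le_mul_left ?_ hc
  linarith

theorem log_div_three_lt_log_sqrt_div {s : ℝ} (hs : 2 ^ 24 < s) :
    Real.log s / 3 < Real.log (√s / 16) := by
  have hs0 : 0 < s := lt_trans (by norm_num) hs
  have h := Real.log_lt_log (by norm_num) hs
  have h16 : Real.log 16 = 4 * Real.log 2 := by
    rw [show (16 : ℝ) = 2 ^ 4 by norm_num, Real.log_pow]; norm_num
  rw [Real.log_pow] at h
  rw [Real.log_div (Real.sqrt_pos.2 hs0).ne' (by norm_num), Real.log_sqrt hs0.le, h16]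
  push_cast at h
  linarith

/-- At least `N - 12M` of the `φ_j` satisfy both logarithmic-area integral
lower bounds. -/
theorem stmt_4 (M N : ℕ) (hM : 0 < M) (hN : 24 * M ≤ N)
    (s : ℝ) (hs : 2 ^ 24 < s)
    (φ : Fin N → ℝ → ℝ) (hmeas : ∀ j, Measurable (φ j))
    (hpos : ∀ j, ∀ t > (0:ℝ), 0 < φ j t)
    (hsum : ∀ t > (0:ℝ), ∑ j, φ j t ≤ 2 * Real.pi) :
    ∃ J : Finset (Fin N), N - 12 * M ≤ J.card ∧ ∀ j ∈ J,
      (ENNReal.ofReal ((M : ℝ) * Real.log s) <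
        ∫⁻ t in Set.Icc (4 * Real.sqrt s) (s / 4),
          ENNReal.ofReal (Real.pi / (t * φ j t))) ∧
      (ENNReal.ofReal ((M : ℝ) * Real.log s) <
        ∫⁻ t in Set.Icc (4 * s) (s ^ 2 / 4),
          ENNReal.ofReal (Real.pi / (t * φ j t))) := by
  classical
  have hs0 : 0 < s := lt_trans (by norm_num) hs
  have hlog : 0 < Real.log s := Real.log_pos (lt_trans (by norm_num) hs)
  have hr : 2 ^ 12 < √s := Real.lt_sqrt_of_sq_lt (by norm_num at hs ⊢; exact hs)
  have hr2 : √s * √s = s := Real.mul_self_sqrt hs0.le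
  have hbad : ∀ a b : ℝ, 0 < a → a ≤ b → √s / 16 ≤ b / a →
      (Finset.univ.filter fun j => ¬ ENNReal.ofReal ((M : ℝ) * Real.log s) <
        ∫⁻ t in Set.Icc a b, ENNReal.ofReal (π / (t * φ j t))).card ≤ 6 * M := by
    intro a b ha hab hba
    set B := Finset.univ.filter fun j => ¬ ENNReal.ofReal ((M : ℝ) * Real.log s) <
        ∫⁻ t in Set.Icc a b, ENNReal.ofReal (π / (t * φ j t)) with hB
    have h := card_mul_log_le B (φ := φ) (C := M * Real.log s) ha hab (by positivity)
      (fun j _ => hmeas j) (fun j _ => hpos j)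
      (fun t ht => (Finset.sum_le_sum_of_subset_of_nonneg (Finset.subset_univ B)
        fun j _ _ => (hpos j t ht).le).trans (hsum t ht))
      (fun j hj => not_lt.1 (Finset.mem_filter.1 hj).2)
    have hlt : Real.log s / 3 ≤ Real.log (b / a) :=
      (log_div_three_lt_log_sqrt_div hs).le.trans (Real.log_le_log (by positivity) hba)
    have hle : (B.card : ℝ) * (Real.log s / 3) ≤ 2 * (M * Real.log s) :=
      (by gcongr : (B.card : ℝ) * (Real.log s / 3) ≤ B.card * Real.log (b / a)).trans h
    have : (B.card : ℝ) ≤ 6 * M := by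
      refine le_of_mul_le_mul_right ?_ hlog
      linarith
    exact_mod_cast this
  have h₁ := hbad (4 * √s) (s / 4) (by positivity) (by nlinarith) (by
    rw [le_div_iff₀ (by positivity)]; nlinarith)
  have h₂ := hbad (4 * s) (s ^ 2 / 4) (by positivity) (by nlinarith) (by
    rw [le_div_iff₀ (by positivity)]; nlinarith)
  refine ⟨Finset.univ.filter fun j => _ ∧ _, ?_, fun j hj => (Finset.mem_filter.1 hj).2⟩
  have hcompl := Finset.card_filter_add_card_filter_not (s := (Finset.univ : Finset (Fin N)))
    (fun j => (ENNReal.ofReal ((M : ℝ) * Real.log s) <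
        ∫⁻ t in Set.Icc (4 * √s) (s / 4), ENNReal.ofReal (π / (t * φ j t))) ∧
      (ENNReal.ofReal ((M : ℝ) * Real.log s) <
        ∫⁻ t in Set.Icc (4 * s) (s ^ 2 / 4), ENNReal.ofReal (π / (t * φ j t))))
  simp only [not_and_or, Finset.filter_or, Finset.card_univ, Fintype.card_fin] at hcompl
  have hunion := (Finset.card_union_le _ _).trans (Nat.add_le_add h₁ h₂)
  omega
end

section
/- Let h map a domain U ⊆ ℂ conformally onto the unit disc D(0,1) with inverse F. For each k ≥ 1 there exists a constant d_k > 0 (depending only on k) and an analytic function V_k on D(0,1) such that h^(k)(F(w)) · F'(w)^k = V_k(w) and |V_k(w)| ≤ d_k / (1 − |w|)^{k−1} for all w ∈ D(0,1). Moreover V₁ ≡ 1 and the functions satisfy the recursion V_{k+1}(w) = V_k'(w) − k V_k(w) F''(w)/F'(w). -/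
open Metric Set

/-- A nonvanishing holomorphic function on a disc that equals `1` at the centre has a holomorphic
square root there which equals `1` at the centre. -/
theorem exists_differentiableOn_sq_eq {f : ℂ → ℂ} {c : ℂ} {r : ℝ} (hr : 0 < r)
    (hf : DifferentiableOn ℂ f (ball c r)) (hf0 : ∀ z ∈ ball c r, f z ≠ 0) (hc : f c = 1) :
    ∃ g : ℂ → ℂ, DifferentiableOn ℂ g (ball c r) ∧ g c = 1 ∧ ∀ z ∈ ball c r, g z ^ 2 = f z := by
  have hq : DifferentiableOn ℂ (fun z ↦ deriv f z / f z) (ball c r) :=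
    (hf.deriv isOpen_ball).div hf hf0
  obtain ⟨L, hLc, hL⟩ := hq.isExactOn_ball.with_val_at c 0
  have hconst : ∀ z ∈ ball c r, f z * Complex.exp (-L z) = 1 := by
    intro z hz
    have hder : ∀ w ∈ ball c r, HasDerivAt (fun z ↦ f z * Complex.exp (-L z)) 0 w := by
      intro w hw
      have h1 := (hf.differentiableAt (isOpen_ball.mem_nhds hw)).hasDerivAt
      have h2 := h1.mul (hL w hw).neg.cexp
      refine h2.congr_deriv ?_
      have := hf0 w hw
      field_simp
      ring
    have := isOpen_ball.is_const_of_deriv_eq_zero (convex_ball c r).isPreconnected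
      (fun w hw ↦ (hder w hw).differentiableAt.differentiableWithinAt)
      (fun w hw ↦ (hder w hw).deriv) hz (mem_ball_self hr)
    simpa [hLc, hc] using this
  refine ⟨fun z ↦ Complex.exp (L z / 2), fun z hz ↦ ?_, by simp [hLc], fun z hz ↦ ?_⟩
  · exact ((hL z hz).differentiableAt.div_const 2).cexp.differentiableWithinAt
  · have h1 := hconst z hz
    rw [Complex.exp_neg, mul_inv_eq_one₀ (Complex.exp_ne_zero _)] at h1
    rw [h1, ← Complex.exp_nat_mul]
    congr 1
    push_cast
    ring

/-- If a conformal map `F` from the unit disc fixes `0`, omits `1`, and its image `U` contains the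
unit disc, then `F` is bounded by `24` near `0`. -/
theorem norm_le_of_conformal_of_one_notMem {U : Set ℂ} {h F : ℂ → ℂ}
    (hh : DifferentiableOn ℂ h U) (hF : DifferentiableOn ℂ F (ball 0 1))
    (hhU : MapsTo h U (ball 0 1)) (hFU : MapsTo F (ball 0 1) U)
    (hFh : ∀ z ∈ U, F (h z) = z) (hhF : ∀ w ∈ ball (0 : ℂ) 1, h (F w) = w)
    (hF0 : F 0 = 0) (h1U : (1 : ℂ) ∉ U) (hU : ball 0 1 ⊆ U) {w : ℂ} (hw : ‖w‖ ≤ 1 / 16) :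
    ‖F w‖ ≤ 24 := by
  have h00 : h 0 = 0 := by simpa [hF0] using hhF 0 (by simp)
  obtain ⟨g, hg, hg0, hgF⟩ := exists_differentiableOn_sq_eq (f := fun z ↦ 1 - F z) one_pos
    (hF.const_sub 1) (fun z hz hz0 ↦ h1U (by rw [sub_eq_zero.1 hz0]; exact hFU hz)) (by simp [hF0])
  have hsub : ∀ v ∈ ball (1 : ℂ) (1 / 3), 1 - v ^ 2 ∈ ball (0 : ℂ) 1 := by
    intro v hv
    rw [mem_ball_iff_norm] at hv
    rw [mem_ball_zero_iff]
    have h2 : ‖v + 1‖ ≤ 7 / 3 := by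
      calc ‖v + 1‖ = ‖(v - 1) + 2‖ := by ring_nf
        _ ≤ ‖v - 1‖ + ‖(2 : ℂ)‖ := norm_add_le _ _
        _ ≤ 7 / 3 := by rw [Complex.norm_ofNat]; linarith
    calc ‖1 - v ^ 2‖ = ‖v - 1‖ * ‖v + 1‖ := by
          rw [← norm_mul, norm_sub_rev]; congr 1; ring
      _ ≤ 1 / 3 * (7 / 3) := by gcongr
      _ < 1 := by norm_num
  have hgid : EqOn (fun v ↦ g (h (1 - v ^ 2))) id (ball (1 : ℂ) (1 / 3)) := by
    refine (convex_ball (1 : ℂ) (1 / 3)).isPreconnected.eq_of_sq_eq ?_ continuousOn_id ?_ ?_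
      (mem_ball_self (by norm_num)) (by simp [h00, hg0])
    · refine hg.continuousOn.comp (hh.continuousOn.comp (by fun_prop) ?_) ?_
      · exact fun v hv ↦ hU (hsub v hv)
      · exact fun v hv ↦ hhU (hU (hsub v hv))
    · intro v hv
      have hv' := hU (hsub v hv)
      simp only [Pi.pow_apply, id]
      rw [hgF _ (hhU hv'), hFh _ hv']
      ring
    · rintro v hv rfl
      norm_num at hv
  have homit : ∀ z ∈ ball (0 : ℂ) 1, 1 / 3 ≤ ‖g z + 1‖ := by
    intro z hz
    by_contra! hlt
    have hv : -g z ∈ ball (1 : ℂ) (1 / 3) := by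
      rwa [mem_ball_iff_norm, ← norm_neg, show -(-g z - 1) = g z + 1 by ring]
    have h1 := hgid hv
    have h2 : 1 - (-g z) ^ 2 = F z := by rw [neg_sq, hgF z hz]; ring
    simp only [h2, hhF z hz, id] at h1
    have h3 : g z = 0 := self_eq_neg.1 h1
    rw [h3] at hlt
    norm_num at hlt
  have hne : ∀ z ∈ ball (0 : ℂ) 1, g z + 1 ≠ 0 := fun z hz h0 ↦ by
    have := homit z hz
    rw [h0] at this
    norm_num at this
  have hk : DifferentiableOn ℂ (fun z ↦ (g z + 1)⁻¹) (ball 0 1) := (hg.add_const 1).inv hne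
  have hk0 : (g 0 + 1)⁻¹ = 1 / 2 := by rw [hg0]; norm_num
  have hkle : ∀ z ∈ ball (0 : ℂ) 1, ‖(g z + 1)⁻¹‖ ≤ 3 := fun z hz ↦ by
    rw [norm_inv]
    exact inv_le_of_inv_le₀ (by norm_num) (by simpa using homit z hz)
  have hwb : w ∈ ball (0 : ℂ) 1 := by
    rw [mem_ball_zero_iff]; linarith
  have hdist := Complex.dist_le_div_mul_dist_of_mapsTo_ball (R₂ := 4) hk (fun z hz ↦ by
    rw [mem_closedBall_iff_norm]
    simp only [hk0]
    refine (norm_sub_le _ _).trans ?_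
    have := hkle z hz
    norm_num
    norm_num at this
    linarith) hwb
  simp only [hk0, dist_eq_norm, sub_zero, div_one] at hdist
  have hlow : 1 / 4 ≤ ‖(g w + 1)⁻¹‖ := by
    have h1 := norm_sub_norm_le (1 / 2 : ℂ) (g w + 1)⁻¹
    rw [norm_sub_rev] at h1
    have h2 : ‖(1 / 2 : ℂ)‖ = 1 / 2 := by norm_num
    linarith
  have hup : ‖g w + 1‖ ≤ 4 := by
    rw [norm_inv] at hlow
    have := le_inv_of_le_inv₀ (by norm_num) hlow
    linarith
  calc ‖F w‖ = ‖g w + 1‖ * ‖2 - (g w + 1)‖ := by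
        rw [← norm_mul]
        congr 1
        linear_combination hgF w hwb
    _ ≤ 4 * (2 + 4) := by
        gcongr
        refine (norm_sub_le _ _).trans ?_
        rw [Complex.norm_ofNat]
        gcongr
    _ = 24 := by norm_num

/-- The second coefficient estimate for normalized conformal maps of the unit disc. -/
theorem norm_deriv_deriv_zero_le_of_conformal_of_one_notMem {U : Set ℂ} {h F : ℂ → ℂ}
    (hh : DifferentiableOn ℂ h U) (hF : DifferentiableOn ℂ F (ball 0 1))
    (hhU : MapsTo h U (ball 0 1)) (hFU : MapsTo F (ball 0 1) U)
    (hFh : ∀ z ∈ U, F (h z) = z) (hhF : ∀ w ∈ ball (0 : ℂ) 1, h (F w) = w)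
    (hF0 : F 0 = 0) (h1U : (1 : ℂ) ∉ U) (hU : ball 0 1 ⊆ U) :
    ‖deriv (deriv F) 0‖ ≤ 12288 * ‖deriv F 0‖ := by
  have h00 : h 0 = 0 := by simpa [hF0] using hhF 0 (by simp)
  have hball : ball (0 : ℂ) 1 ∈ nhds 0 := ball_mem_nhds _ one_pos
  have h2 : ‖deriv (deriv F) 0‖ ≤ 12288 := by
    have := Complex.norm_iteratedDeriv_le_of_forall_mem_sphere_norm_le (c := 0) (R := 1 / 16)
      (C := 24) (f := F) 2 (by norm_num)
      (hF.diffContOnCl_ball (closedBall_subset_ball (by norm_num)))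
      (fun z hz ↦ norm_le_of_conformal_of_one_notMem hh hF hhU hFU hFh hhF hF0 h1U hU
        (by simpa using (mem_sphere_zero_iff_norm.1 hz).le))
    rw [iteratedDeriv_succ, iteratedDeriv_one] at this
    norm_num [Nat.factorial] at this
    exact this
  have h1 : ‖deriv h 0‖ ≤ 1 :=
    Complex.norm_deriv_le_one_of_mapsTo_ball (hh.mono hU)
      (fun z hz ↦ by rw [h00]; exact ball_subset_closedBall (hhU (hU hz))) one_pos
  have hprod : deriv h 0 * deriv F 0 = 1 := by
    have hF' := (hF.differentiableAt hball).hasDerivAt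
    have hh' : HasDerivAt h (deriv h 0) (F 0) := by
      rw [hF0]
      exact ((hh.mono hU).differentiableAt hball).hasDerivAt
    have hid : HasDerivAt (h ∘ F) 1 0 :=
      (hasDerivAt_id (0 : ℂ)).congr_of_eventuallyEq (by
        filter_upwards [hball] with w hw using hhF w hw)
    exact (hh'.comp 0 hF').unique hid
  have h3 : 1 ≤ ‖deriv F 0‖ := by
    calc 1 = ‖deriv h 0‖ * ‖deriv F 0‖ := by rw [← norm_mul, hprod, norm_one]
      _ ≤ 1 * ‖deriv F 0‖ := by gcongr
      _ = _ := one_mul _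
  linarith

/-- The pre-Schwarzian estimate for conformal maps of the unit disc, with a non-sharp constant. -/
theorem norm_deriv_deriv_le_of_conformal {U : Set ℂ} {h F : ℂ → ℂ} (hUo : IsOpen U)
    (hh : DifferentiableOn ℂ h U) (hF : DifferentiableOn ℂ F (ball 0 1))
    (hhU : MapsTo h U (ball 0 1)) (hFU : MapsTo F (ball 0 1) U)
    (hFh : ∀ z ∈ U, F (h z) = z) (hhF : ∀ w ∈ ball (0 : ℂ) 1, h (F w) = w)
    {w : ℂ} (hw : w ∈ ball (0 : ℂ) 1) :
    (1 - ‖w‖) * ‖deriv (deriv F) w‖ ≤ 12288 * ‖deriv F w‖ := by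
  set r : ℝ := 1 - ‖w‖ with hr_def
  have hr : 0 < r := sub_pos.2 (mem_ball_zero_iff.1 hw)
  have hrC : (r : ℂ) ≠ 0 := by exact_mod_cast hr.ne'
  have hnr : ‖(r : ℂ)‖ = r := by simp [abs_of_pos hr]
  have hsub : ∀ z ∈ ball (0 : ℂ) 1, w + r * z ∈ ball w r := by
    intro z hz
    rw [mem_ball_iff_norm, add_sub_cancel_left, norm_mul, hnr]
    exact mul_lt_of_lt_one_right hr (mem_ball_zero_iff.1 hz)
  have hsub' : ball w r ⊆ ball (0 : ℂ) 1 := by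
    refine ball_subset_ball' ?_
    rw [dist_zero_right, hr_def]
    linarith
  set W : Set ℂ := U ∩ h ⁻¹' ball w r with hW
  have hWo : IsOpen W := hh.continuousOn.isOpen_inter_preimage hUo isOpen_ball
  have hFW : ∀ z ∈ ball w r, F z ∈ W := fun z hz ↦
    ⟨hFU (hsub' hz), by rw [mem_preimage, hhF z (hsub' hz)]; exact hz⟩
  have hpW : F w ∈ W := hFW w (mem_ball_self hr)
  have hWne : (Wᶜ).Nonempty := by
    by_contra hne
    rw [not_nonempty_iff_eq_empty, compl_empty_iff] at hne
    have hUuniv : U = univ := univ_subset_iff.1 (hne ▸ inter_subset_left)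
    have hd : Differentiable ℂ h := by rwa [hUuniv, differentiableOn_univ] at hh
    have hb : Bornology.IsBounded (range h) := isBounded_ball (x := (0 : ℂ)) (r := 1) |>.subset (by
      rintro _ ⟨z, rfl⟩
      exact hhU (hUuniv ▸ mem_univ z))
    have h1 := hhF 0 (by simp)
    have h2 := hhF (1 / 2) (by norm_num)
    rw [hd.apply_eq_apply_of_bounded hb (F 0) (F (1 / 2)), h2] at h1
    norm_num at h1
  obtain ⟨a, haW, ha⟩ := hWo.isClosed_compl.exists_infDist_eq_dist hWne (F w)
  set b : ℂ := a - F w with hb_def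
  have hb : b ≠ 0 := sub_ne_zero.2 (fun h0 ↦ haW (h0 ▸ hpW))
  have key := norm_deriv_deriv_zero_le_of_conformal_of_one_notMem
    (U := (fun ζ ↦ F w + b * ζ) ⁻¹' W) (h := fun ζ ↦ (h (F w + b * ζ) - w) / r)
    (F := fun z ↦ (F (w + r * z) - F w) / b) ?_ ?_ ?_ ?_ ?_ ?_ ?_ ?_ ?_
  · have hd1 : deriv (fun z ↦ (F (w + r * z) - F w) / b) =
        fun z ↦ r * deriv F (w + r * z) / b := by
      funext z
      rw [deriv_div_const, deriv_sub_const,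
        deriv_comp_mul_left (r : ℂ) (fun y ↦ F (w + y)) z, deriv_comp_const_add, smul_eq_mul]
    have hd2 : deriv (fun z ↦ r * deriv F (w + r * z) / b) 0 =
        r * (r * deriv (deriv F) w) / b := by
      rw [deriv_div_const, deriv_const_mul_field,
        deriv_comp_mul_left (r : ℂ) (fun y ↦ deriv F (w + y)) 0, deriv_comp_const_add, smul_eq_mul,
        mul_zero, add_zero]
    rw [hd1, hd2] at key
    simp only [mul_zero, add_zero, norm_div, norm_mul, hnr] at key
    have hb' : 0 < ‖b‖ := norm_pos_iff.2 hb
    rw [← mul_div_assoc, div_le_div_iff_of_pos_right hb'] at key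
    refine le_of_mul_le_mul_left ?_ hr
    linarith
  · refine DifferentiableOn.div_const (DifferentiableOn.sub_const ?_ _) _
    exact hh.comp (by fun_prop) fun ζ hζ ↦ hζ.1
  · refine DifferentiableOn.div_const (DifferentiableOn.sub_const ?_ _) _
    exact hF.comp (by fun_prop) fun z hz ↦ hsub' (hsub z hz)
  · intro ζ hζ
    have := hζ.2
    rw [mem_preimage, mem_ball_iff_norm] at this
    rw [mem_ball_zero_iff, norm_div, hnr]
    exact (div_lt_one hr).2 this
  · intro z hz
    simpa [mul_div_cancel₀ _ hb] using hFW _ (hsub z hz)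
  · intro ζ hζ
    simp only [mul_div_cancel₀ _ hrC, add_sub_cancel]
    rw [hFh _ hζ.1]
    field_simp
    ring
  · intro z hz
    simp only [mul_div_cancel₀ _ hb, add_sub_cancel]
    rw [hhF _ (hsub' (hsub z hz))]
    field_simp
    ring
  · simp
  · simpa [hb_def] using haW
  · intro ζ hζ
    by_contra hn
    have h1 := infDist_le_dist_of_mem (x := F w) (s := Wᶜ) hn
    rw [ha, dist_eq_norm, dist_eq_norm, sub_add_cancel_left, norm_neg, norm_mul, norm_sub_rev]
      at h1
    have h2 : ‖b‖ * ‖ζ‖ < ‖b‖ :=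
      mul_lt_of_lt_one_right (norm_pos_iff.2 hb) (mem_ball_zero_iff.1 hζ)
    linarith

/-- The functions `V k` with `h^(k) ∘ F * F' ^ k = V k` for the inverse `h` of a conformal map `F`,
given by their recursion. -/
noncomputable def inverseDerivSeq (F : ℂ → ℂ) : ℕ → ℂ → ℂ
  | 0 => id
  | k + 1 => fun w ↦ deriv (inverseDerivSeq F k) w
      - (k : ℂ) * inverseDerivSeq F k w * (deriv (deriv F) w / deriv F w)

theorem inverseDerivSeq_one (F : ℂ → ℂ) (w : ℂ) : inverseDerivSeq F 1 w = 1 := by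
  simp [inverseDerivSeq]

theorem analyticOnNhd_inverseDerivSeq {F : ℂ → ℂ} {s : Set ℂ} (hF : AnalyticOnNhd ℂ F s)
    (hF' : ∀ w ∈ s, deriv F w ≠ 0) (k : ℕ) : AnalyticOnNhd ℂ (inverseDerivSeq F k) s := by
  induction k with
  | zero => exact analyticOnNhd_id
  | succ k ih =>
    exact ih.deriv.sub ((analyticOnNhd_const.mul ih).mul (hF.deriv.deriv.div hF.deriv hF'))

theorem iteratedDeriv_mul_deriv_pow_eq_inverseDerivSeq {U s : Set ℂ} {h F : ℂ → ℂ}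
    (hs : IsOpen s) (hh : AnalyticOnNhd ℂ h U) (hF : AnalyticOnNhd ℂ F s) (hFU : MapsTo F s U)
    (hF' : ∀ w ∈ s, deriv F w ≠ 0) (hhF : ∀ w ∈ s, h (F w) = w) (k : ℕ) :
    ∀ w ∈ s, iteratedDeriv k h (F w) * deriv F w ^ k = inverseDerivSeq F k w := by
  induction k with
  | zero => simpa [inverseDerivSeq] using hhF
  | succ k ih =>
    intro w hw
    have h1 : HasDerivAt (fun z ↦ iteratedDeriv k h (F z)) (iteratedDeriv (k + 1) h (F w) *
        deriv F w) w := by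
      rw [iteratedDeriv_succ]
      have hk := hh.iterated_deriv k (F w) (hFU hw)
      rw [← iteratedDeriv_eq_iterate] at hk
      exact hk.differentiableAt.hasDerivAt.comp w (hF w hw).differentiableAt.hasDerivAt
    have h2 := (hF.deriv w hw).differentiableAt.hasDerivAt.pow k
    have h3 := ((h1.mul h2).congr_of_eventuallyEq (f₁ := inverseDerivSeq F k) (by
      filter_upwards [hs.mem_nhds hw] with z hz using (ih z hz).symm)).deriv
    have hne := hF' w hw
    simp only [inverseDerivSeq]
    rw [h3, ← ih w hw]
    rcases k with _ | k
    · simp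
    · simp only [Nat.add_sub_cancel, Pi.pow_apply]
      field_simp
      ring

theorem norm_deriv_le_of_norm_le_div_pow {V : ℂ → ℂ} (hV : DifferentiableOn ℂ V (ball 0 1))
    {d : ℝ} {n : ℕ} (hd : ∀ w ∈ ball (0 : ℂ) 1, ‖V w‖ ≤ d / (1 - ‖w‖) ^ n) {w : ℂ}
    (hw : w ∈ ball (0 : ℂ) 1) : ‖deriv V w‖ ≤ 2 ^ (n + 1) * d / (1 - ‖w‖) ^ (n + 1) := by
  have hr : 0 < 1 - ‖w‖ := sub_pos.2 (mem_ball_zero_iff.1 hw)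
  have hd0 : 0 ≤ d := by simpa using (norm_nonneg _).trans (hd 0 (by simp))
  have hz1 : ∀ z ∈ closedBall w ((1 - ‖w‖) / 2), ‖z‖ ≤ 1 - (1 - ‖w‖) / 2 := fun z hz ↦ by
    rw [mem_closedBall_iff_norm] at hz
    have := norm_sub_norm_le z w
    linarith
  have := Complex.norm_deriv_le_of_forall_mem_sphere_norm_le (c := w) (R := (1 - ‖w‖) / 2)
    (C := d / ((1 - ‖w‖) / 2) ^ n) (f := V) (by positivity)
    (hV.diffContOnCl_ball fun z hz ↦ by
      have := hz1 z hz
      rw [mem_ball_zero_iff]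
      linarith)
    (fun z hz ↦ by
      have h1 := hz1 z (sphere_subset_closedBall hz)
      refine (hd z (by rw [mem_ball_zero_iff]; linarith)).trans ?_
      gcongr
      linarith)
  refine this.trans_eq ?_
  rw [div_pow]
  field_simp
  ring

theorem norm_inverseDerivSeq_le {F : ℂ → ℂ} {C : ℝ} (hC : 0 ≤ C)
    (hF : AnalyticOnNhd ℂ F (ball 0 1)) (hF' : ∀ w ∈ ball (0 : ℂ) 1, deriv F w ≠ 0)
    (hFC : ∀ w ∈ ball (0 : ℂ) 1, ‖deriv (deriv F) w / deriv F w‖ ≤ C / (1 - ‖w‖)) (k : ℕ) :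
    ∀ w ∈ ball (0 : ℂ) 1, ‖inverseDerivSeq F (k + 1) w‖ ≤
      (∏ i ∈ Finset.range k, (2 ^ (i + 1) + (i + 1) * C)) / (1 - ‖w‖) ^ k := by
  induction k with
  | zero => simp [inverseDerivSeq_one]
  | succ k ih =>
    intro w hw
    have hr : 0 < 1 - ‖w‖ := sub_pos.2 (mem_ball_zero_iff.1 hw)
    have h1 := norm_deriv_le_of_norm_le_div_pow
      (analyticOnNhd_inverseDerivSeq hF hF' (k + 1)).differentiableOn ih hw
    rw [inverseDerivSeq, Finset.prod_range_succ]
    set P := ∏ i ∈ Finset.range k, (2 ^ (i + 1) + ((i : ℝ) + 1) * C)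
    have hk : ‖((k + 1 : ℕ) : ℂ)‖ = k + 1 := by
      rw [Complex.norm_natCast]
      push_cast
      rfl
    have hP : 0 ≤ P := by positivity
    calc _ ≤ _ := norm_sub_le _ _
      _ ≤ 2 ^ (k + 1) * P / (1 - ‖w‖) ^ (k + 1) +
          (k + 1) * (P / (1 - ‖w‖) ^ k) * (C / (1 - ‖w‖)) := by
        rw [norm_mul, norm_mul, hk]
        gcongr
        · exact ih w hw
        · exact hFC w hw
      _ = _ := by
        field_simp
        ring

/-- Derivative estimates for conformal maps onto the unit disc: there are
constants `d k` depending only on `k` such that for any conformal map `h`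
of a domain `U` onto the unit disc with inverse `F`, there are analytic
functions `V k` with `h^(k)(F w) F'(w)^k = V k w`,
`|V k w| ≤ d k / (1-|w|)^(k-1)`, `V 1 ≡ 1`, and the recursion
`V (k+1) = (V k)' - k · (V k) · F''/F'`. -/
theorem stmt_6 :
    ∃ d : ℕ → ℝ, (∀ k, 1 ≤ k → 0 < d k) ∧
      ∀ (U : Set ℂ) (h F : ℂ → ℂ), IsOpen U →
        AnalyticOnNhd ℂ h U → AnalyticOnNhd ℂ F (ball (0:ℂ) 1) →
        Set.MapsTo h U (ball (0:ℂ) 1) → Set.MapsTo F (ball (0:ℂ) 1) U →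
        (∀ z ∈ U, F (h z) = z) → (∀ w ∈ ball (0:ℂ) 1, h (F w) = w) →
        ∃ V : ℕ → ℂ → ℂ,
          (∀ k, 1 ≤ k → AnalyticOnNhd ℂ (V k) (ball (0:ℂ) 1)) ∧
          (∀ k, 1 ≤ k → ∀ w ∈ ball (0:ℂ) 1,
            iteratedDeriv k h (F w) * (deriv F w) ^ k = V k w ∧
            ‖V k w‖ ≤ d k / (1 - ‖w‖) ^ (k - 1)) ∧
          (∀ w, V 1 w = 1) ∧
          (∀ k, 1 ≤ k → ∀ w ∈ ball (0:ℂ) 1,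
            V (k + 1) w = deriv (V k) w
              - (k : ℂ) * V k w * (deriv (deriv F) w / deriv F w)) := by
  refine ⟨fun k ↦ ∏ i ∈ Finset.range (k - 1), (2 ^ (i + 1) + ((i : ℝ) + 1) * 12288),
    fun k _ ↦ by positivity, ?_⟩
  intro U h F hU hh hF hhU hFU hFh hhF
  have hF' : ∀ w ∈ ball (0 : ℂ) 1, deriv F w ≠ 0 := by
    intro w hw h0
    have h1 := (hh (F w) (hFU hw)).differentiableAt.hasDerivAt.comp w
      (hF w hw).differentiableAt.hasDerivAt
    have h2 : HasDerivAt (h ∘ F) 1 w := (hasDerivAt_id w).congr_of_eventuallyEq (by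
      filter_upwards [isOpen_ball.mem_nhds hw] with z hz using hhF z hz)
    have := h1.unique h2
    simp [h0] at this
  have hFC : ∀ w ∈ ball (0 : ℂ) 1, ‖deriv (deriv F) w / deriv F w‖ ≤ 12288 / (1 - ‖w‖) := by
    intro w hw
    have hr : 0 < 1 - ‖w‖ := sub_pos.2 (mem_ball_zero_iff.1 hw)
    have := norm_deriv_deriv_le_of_conformal hU hh.differentiableOn hF.differentiableOn
      hhU hFU hFh hhF hw
    rw [norm_div, div_le_div_iff₀ (norm_pos_iff.2 (hF' w hw)) hr]
    linarith
  refine ⟨inverseDerivSeq F, fun k _ ↦ analyticOnNhd_inverseDerivSeq hF hF' k,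
    fun k hk w hw ↦ ⟨iteratedDeriv_mul_deriv_pow_eq_inverseDerivSeq isOpen_ball hh hF hFU hF' hhF
      k w hw, ?_⟩, inverseDerivSeq_one F, fun k _ w _ ↦ rfl⟩
  obtain ⟨k, rfl⟩ := Nat.exists_eq_add_of_le' hk
  exact norm_inverseDerivSeq_le (by norm_num) hF hF' hFC k w hw
end
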